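/- arXiv:2011.09909 — 2 statements merged into one kernel-verified Lean document; each statement's English description precedes it below -/
import Mathlib

section
/- Every 2D harmonic fourth-order tensor H is a harmonic square: there exists a symmetric traceless 2×2 real matrix h such that H i j k l = h i j · h k l − ½(Σₚq (h p q)²)·J i j k l for all indices. Moreover H is also the opposite of a harmonic square: there exists a symmetric traceless 2×2 real matrix k with H i j k l = −(k i j · k k l − ½(Σₚq (k p q)²)·J i j k l). -/
open Finset

noncomputable section

/-- A fourth-order tensor on `ℝ²`. -/
abbrev Tens4 := Fin 2 → Fin 2 → Fin 2 → Fin 2 → ℝ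

/-- Kronecker delta on `Fin 2`. -/
def kdelta (i j : Fin 2) : ℝ := if i = j then 1 else 0

/-- The isotropic fourth-order tensor `J`. -/
def Jten (i j k l : Fin 2) : ℝ :=
  (kdelta i k * kdelta j l + kdelta i l * kdelta j k) / 2 - kdelta i j * kdelta k l / 2

/-- A 2D elasticity tensor: minor and major index symmetries. -/
def IsElas (C : Tens4) : Prop :=
  (∀ i j k l, C i j k l = C j i k l) ∧ (∀ i j k l, C i j k l = C i j l k) ∧
    (∀ i j k l, C i j k l = C k l i j)

/-- Dilatation tensor `d(C)ᵢⱼ = Σₖ C k k i j`. -/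
def dil (C : Tens4) (i j : Fin 2) : ℝ := ∑ k, C k k i j

/-- Voigt tensor `v(C)ᵢⱼ = Σₖ C k i k j`. -/
def voigt (C : Tens4) (i j : Fin 2) : ℝ := ∑ k, C k i k j

/-- Shear modulus `μ(C)`. -/
def muC (C : Tens4) : ℝ := (2 * ∑ i, voigt C i i - ∑ i, dil C i i) / 8

/-- 2D bulk modulus `κ(C)`. -/
def kappaC (C : Tens4) : ℝ := (∑ i, dil C i i) / 4

/-- Deviatoric part `d'(C)` of the dilatation tensor. -/
def devC (C : Tens4) (i j : Fin 2) : ℝ := dil C i j - (∑ k, dil C k k) / 2 * kdelta i j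

/-- Harmonic (fourth-order) part `H(C)` of the elasticity tensor. -/
def harmC (C : Tens4) (i j k l : Fin 2) : ℝ :=
  C i j k l - 2 * muC C * Jten i j k l - kappaC C * kdelta i j * kdelta k l
    - (kdelta i j * devC C k l + devC C i j * kdelta k l) / 2

/-- A 2D harmonic fourth-order tensor: totally symmetric (invariant under all
permutations of its four indices) and traceless. -/
def IsHarmonic (H : Tens4) : Prop :=
  (∀ (σ : Equiv.Perm (Fin 4)) (v : Fin 4 → Fin 2),
      H (v (σ 0)) (v (σ 1)) (v (σ 2)) (v (σ 3)) = H (v 0) (v 1) (v 2) (v 3)) ∧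
    (∀ i j : Fin 2, ∑ k, H k k i j = 0)

/-- A symmetric traceless (deviatoric) `2×2` real matrix. -/
def IsDev (h : Matrix (Fin 2) (Fin 2) ℝ) : Prop :=
  (∀ i j, h i j = h j i) ∧ h 0 0 + h 1 1 = 0

/-- The harmonic square `h ∗ h` of a symmetric traceless `2×2` matrix `h`. -/
def hsq (h : Matrix (Fin 2) (Fin 2) ℝ) (i j k l : Fin 2) : ℝ :=
  h i j * h k l - (∑ p, ∑ q, (h p q) ^ 2) / 2 * Jten i j k l

/-!
With the isotropic vector `e = (1, -i)`, for which `∑ₖ eₖ eₖ = 0`, the real part of `z e ⊗ ⋯ ⊗ e`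
is symmetric and traceless, and in two dimensions every harmonic tensor is of this form, with `z`
read off from two components. If `h = Re (w e ⊗ e)`, the identity
`Re u Re v = (Re (u v) + Re (u conj v)) / 2` gives `h ∗ h = Re ((w² / 2) e ⊗ e ⊗ e ⊗ e)`, since
the terms `Re (u conj v)` form the tensor `2 ‖w‖² J`. So `h ∗ h = H` asks for a square root of the
complex number `2 z`. As `-H` is again harmonic, it is a harmonic square too.
-/

section ComplexRepresentation

open Complex ComplexConjugate

/-- The isotropic vector `e = (1, -i)` of `ℂ²`, the building block of harmonic tensors in two
dimensions. The sign is chosen so that `Re (w eᵢ eⱼ)` has entries `w.re` and `w.im` in its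
first row. -/
def isotropicVec : Fin 2 → ℂ := ![1, -I]

/-- The harmonic fourth-order tensor `Re (z e ⊗ e ⊗ e ⊗ e)` with complex parameter `z`, where
`e` is `isotropicVec`. -/
def harmonicTensor (z : ℂ) : Tens4 := fun i j k l =>
  (z * (isotropicVec i * isotropicVec j * (isotropicVec k * isotropicVec l))).re

/-- The deviatoric matrix `Re (w e ⊗ e)` with complex parameter `w`, where `e` is
`isotropicVec`. -/
def devMatrix (w : ℂ) : Matrix (Fin 2) (Fin 2) ℝ :=
  Matrix.of fun i j => (w * (isotropicVec i * isotropicVec j)).re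

theorem isDev_devMatrix (w : ℂ) : IsDev (devMatrix w) :=
  ⟨fun i j => by simp only [devMatrix, Matrix.of_apply, mul_comm (isotropicVec i)],
    by simp [devMatrix, isotropicVec]⟩

theorem sum_sq_devMatrix (w : ℂ) : ∑ p, ∑ q, devMatrix w p q ^ 2 = 2 * normSq w := by
  have entries : devMatrix w = !![w.re, w.im; w.im, -w.re] := by
    ext i j
    fin_cases i <;> fin_cases j <;> simp [devMatrix, isotropicVec]
  simp only [entries, Fin.sum_univ_two, Matrix.of_apply, Matrix.cons_val_zero,
    Matrix.cons_val_one, Matrix.cons_val_fin_one, normSq_apply]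
  ring

theorem Jten_eq_re (i j k l : Fin 2) :
    Jten i j k l =
      (isotropicVec i * isotropicVec j * conj (isotropicVec k * isotropicVec l)).re / 2 := by
  fin_cases i <;> fin_cases j <;> fin_cases k <;> fin_cases l <;>
    norm_num [Jten, kdelta, isotropicVec]

theorem re_mul_re (u v : ℂ) : u.re * v.re = ((u * v).re + (u * conj v).re) / 2 := by
  simp only [mul_re, conj_re, conj_im]
  ring

theorem hsq_devMatrix (w : ℂ) : hsq (devMatrix w) = harmonicTensor (w ^ 2 / 2) := by
  funext i j k l
  rw [hsq, sum_sq_devMatrix, Jten_eq_re]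
  simp only [devMatrix, harmonicTensor, Matrix.of_apply]
  set p := isotropicVec i * isotropicVec j
  set q := isotropicVec k * isotropicVec l
  have hconj : (w * p * conj (w * q)).re = normSq w * (p * conj q).re := by
    rw [← re_ofReal_mul, ← mul_conj, map_mul, mul_mul_mul_comm]
  have hmul : (w * p * (w * q)).re / 2 = (w ^ 2 / 2 * (p * q)).re := by
    rw [← div_ofNat_re]
    congr 1
    ring
  rw [re_mul_re, hconj, ← hmul]
  ring

theorem exists_hsq_eq_harmonicTensor (z : ℂ) :
    ∃ h : Matrix (Fin 2) (Fin 2) ℝ, IsDev h ∧ hsq h = harmonicTensor z := by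
  obtain ⟨w, hw⟩ := IsAlgClosed.exists_pow_nat_eq (2 * z) two_pos
  refine ⟨devMatrix w, isDev_devMatrix w, ?_⟩
  rw [hsq_devMatrix, hw, mul_div_cancel_left₀ z two_ne_zero]

end ComplexRepresentation

namespace IsHarmonic

variable {H : Tens4}

theorem neg (hH : IsHarmonic H) : IsHarmonic (-H) :=
  ⟨fun σ v => congrArg Neg.neg (hH.1 σ v), fun i j => by
    simp only [Pi.neg_apply, Finset.sum_neg_distrib, hH.2, neg_zero]⟩

theorem swap_zero_one (hH : IsHarmonic H) (i j k l : Fin 2) : H j i k l = H i j k l := by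
  simpa [Equiv.swap_apply_def] using hH.1 (Equiv.swap 0 1) ![i, j, k, l]

theorem swap_one_two (hH : IsHarmonic H) (i j k l : Fin 2) : H i k j l = H i j k l := by
  simpa [Equiv.swap_apply_def] using hH.1 (Equiv.swap 1 2) ![i, j, k, l]

theorem swap_two_three (hH : IsHarmonic H) (i j k l : Fin 2) : H i j l k = H i j k l := by
  simpa [Equiv.swap_apply_def] using hH.1 (Equiv.swap 2 3) ![i, j, k, l]

theorem one_one_eq_neg (hH : IsHarmonic H) (i j : Fin 2) : H 1 1 i j = -H 0 0 i j := by
  rw [eq_neg_iff_add_eq_zero, add_comm, ← Fin.sum_univ_two fun k => H k k i j, hH.2]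

theorem eq_harmonicTensor (hH : IsHarmonic H) :
    H = harmonicTensor ⟨H 0 0 0 0, H 0 0 0 1⟩ := by
  -- Symmetry moves the indices `1` to the end, and the trace condition then removes them in pairs.
  have sort₁ (k l) : H 1 0 k l = H 0 1 k l := hH.swap_zero_one 0 1 k l
  have sort₂ (i l) : H i 1 0 l = H i 0 1 l := hH.swap_one_two i 0 1 l
  have sort₃ (i j) : H i j 1 0 = H i j 0 1 := hH.swap_two_three i j 0 1
  have h0011 : H 0 0 1 1 = -H 0 0 0 0 := by
    rw [← hH.one_one_eq_neg, sort₂, sort₁, sort₃, sort₂]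
  have h0111 : H 0 1 1 1 = -H 0 0 0 1 := by
    rw [← hH.one_one_eq_neg, sort₂, sort₁]
  have h1111 : H 1 1 1 1 = H 0 0 0 0 := by
    rw [hH.one_one_eq_neg, h0011, neg_neg]
  funext i j k l
  fin_cases i <;> fin_cases j <;> fin_cases k <;> fin_cases l <;>
    simp [harmonicTensor, isotropicVec, sort₁, sort₂, sort₃, h0011, h0111, h1111]

theorem exists_hsq_eq (hH : IsHarmonic H) :
    ∃ h : Matrix (Fin 2) (Fin 2) ℝ, IsDev h ∧ hsq h = H :=
  (exists_hsq_eq_harmonicTensor _).imp fun _ hh => hh.imp_right (·.trans hH.eq_harmonicTensor.symm)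

end IsHarmonic

/-- Every 2D harmonic fourth-order tensor is a harmonic square
`h ∗ h`, and also the opposite of a harmonic square `-(k ∗ k)`. -/
theorem harmonic_is_harmonic_square (H : Tens4) (hH : IsHarmonic H) :
    (∃ h : Matrix (Fin 2) (Fin 2) ℝ, IsDev h ∧
        ∀ i j k l, H i j k l = hsq h i j k l) ∧
      (∃ k : Matrix (Fin 2) (Fin 2) ℝ, IsDev k ∧
        ∀ i j k' l, H i j k' l = -(hsq k i j k' l)) := by
  obtain ⟨h, hdev, hsq_eq⟩ := hH.exists_hsq_eq
  obtain ⟨k, kdev, ksq_eq⟩ := hH.neg.exists_hsq_eq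
  refine ⟨⟨h, hdev, fun i j k l => ?_⟩, ⟨k, kdev, fun i j k' l => ?_⟩⟩
  · rw [hsq_eq]
  · simp only [ksq_eq, Pi.neg_apply, neg_neg]
end
end

section
/- Let C be an orthotropic 2D elasticity tensor with d'(C) ≠ 0. Then d'(C) is an eigentensor of the harmonic part H(C): for all i, j, Σₖₗ H(C) i j k l · d'(C) k l = (K₃(C)/I₂(C))·d'(C) i j, where I₂(C) = Σᵢⱼ (d'(C) i j)² and K₃(C) = Σᵢⱼₖₗ d(C) i j · H(C) i j k l · d(C) k l. -/
open Finset

noncomputable section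

/-- Rotation matrix of angle `θ`. -/
def rot (θ : ℝ) : Matrix (Fin 2) (Fin 2) ℝ :=
  !![Real.cos θ, -Real.sin θ; Real.sin θ, Real.cos θ]

/-- Action `g ⋆ C` of a `2×2` matrix `g` on a fourth-order tensor `C`. -/
def act (g : Matrix (Fin 2) (Fin 2) ℝ) (C : Tens4) (i j k l : Fin 2) : ℝ :=
  ∑ p, ∑ q, ∑ r, ∑ s, g i p * g j q * g k r * g l s * C p q r s

/-- `C` is orthotropic: in some rotated basis, the components `1112` and `1222` vanish. -/
def IsOrtho (C : Tens4) : Prop :=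
  ∃ θ : ℝ, act (rot θ) C 0 0 0 1 = 0 ∧ act (rot θ) C 0 1 1 1 = 0

/-- Invariant `I₂ = ‖d'(C)‖²`. -/
def I2 (C : Tens4) : ℝ := ∑ i, ∑ j, (devC C i j) ^ 2

/-- Invariant `J₂ = ‖H(C)‖²`. -/
def J2 (C : Tens4) : ℝ := ∑ i, ∑ j, ∑ k, ∑ l, (harmC C i j k l) ^ 2

/-- Invariant `K₃ = d(C) : H(C) : d(C)`. -/
def K3 (C : Tens4) : ℝ :=
  ∑ i, ∑ j, ∑ k, ∑ l, dil C i j * harmC C i j k l * dil C k l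

/-!
Let `C` act on second-order tensors by double contraction. Orthotropy in the orthonormal frame
`u, v` says that `C : (u ⊗ v + v ⊗ u)` is orthogonal to `u ⊗ u` and `v ⊗ v`, that is, the
deviator `p = u ⊗ v + v ⊗ u` is an eigentensor of `C`. As `d(C) = C : δ` and `C` is self-adjoint,
`d'(C)` is then orthogonal to `p`. On a deviator `a`, `H(C) : a` differs from `C : a - 2 μ(C) a`
only by a multiple of `(d'(C) : a) δ`, so `p` is also an eigentensor of `H(C)`. Now `H(C)` is
self-adjoint and preserves the plane of deviators, hence it preserves the line orthogonal to `p`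
there, which `d'(C)` spans. Since `H(C) : δ = 0`, pairing with `d'(C)` gives the eigenvalue.
-/

section DoubleContraction

variable {ι : Type*}

/-- The tensor product `u ⊗ v` of two vectors. -/
def dyad (u v : ι → ℝ) (i j : ι) : ℝ := u i * v j

variable [Fintype ι]

/-- The double contraction `a : b = Σᵢⱼ aᵢⱼ bᵢⱼ` of second-order tensors, as a bilinear form. -/
def doubleDot : LinearMap.BilinForm ℝ (ι → ι → ℝ) :=
  LinearMap.mk₂ ℝ (fun a b => ∑ i, ∑ j, a i j * b i j)
    (fun a a' b => by simp [add_mul, sum_add_distrib])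
    (fun t a b => by simp [mul_sum, mul_assoc])
    (fun a b b' => by simp [mul_add, sum_add_distrib])
    (fun t a b => by simp [mul_sum, mul_left_comm])

/-- The double contraction `(C : a)ᵢⱼ = Σₖₗ Cᵢⱼₖₗ aₖₗ`, by which a fourth-order tensor acts linearly
on second-order tensors. -/
def contract (C : ι → ι → ι → ι → ℝ) : (ι → ι → ℝ) →ₗ[ℝ] (ι → ι → ℝ) where
  toFun a i j := ∑ k, ∑ l, C i j k l * a k l
  map_add' a b := by ext; simp [mul_add, sum_add_distrib]
  map_smul' t a := by ext; simp [mul_sum, mul_left_comm]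

/-- A deviator: a symmetric traceless second-order tensor. -/
structure IsDeviator (a : ι → ι → ℝ) : Prop where
  symm : ∀ i j, a i j = a j i
  trace_eq_zero : ∑ i, a i i = 0

theorem doubleDot_apply (a b : ι → ι → ℝ) : doubleDot a b = ∑ i, ∑ j, a i j * b i j := rfl

theorem contract_apply (C : ι → ι → ι → ι → ℝ) (a : ι → ι → ℝ) (i j : ι) :
    contract C a i j = ∑ k, ∑ l, C i j k l * a k l := rfl

theorem doubleDot_comm (a b : ι → ι → ℝ) : doubleDot a b = doubleDot b a := by
  simp only [doubleDot_apply, mul_comm]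

theorem doubleDot_self_eq_zero {a : ι → ι → ℝ} : doubleDot a a = 0 ↔ a = 0 := by
  rw [doubleDot_apply, ← Fintype.sum_prod_type', Fintype.sum_eq_zero_iff_of_nonneg
    fun x => mul_self_nonneg _]
  simp [funext_iff]

theorem doubleDot_dyad (u v w z : ι → ℝ) :
    doubleDot (dyad u v) (dyad w z) = (u ⬝ᵥ w) * (v ⬝ᵥ z) := by
  simp only [doubleDot_apply, dyad, dotProduct, sum_mul_sum, mul_mul_mul_comm]

theorem doubleDot_contract_comm {C : ι → ι → ι → ι → ℝ}
    (hC : ∀ i j k l, C i j k l = C k l i j) (a b : ι → ι → ℝ) :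
    doubleDot a (contract C b) = doubleDot b (contract C a) := by
  simp only [doubleDot_apply, contract_apply, mul_sum]
  calc ∑ i, ∑ j, ∑ k, ∑ l, a i j * (C i j k l * b k l)
      = ∑ x : ι × ι, ∑ y : ι × ι, a x.1 x.2 * (C x.1 x.2 y.1 y.2 * b y.1 y.2) := by
        simp only [Fintype.sum_prod_type]
    _ = ∑ y : ι × ι, ∑ x : ι × ι, b y.1 y.2 * (C y.1 y.2 x.1 x.2 * a x.1 x.2) := by
        rw [sum_comm]
        refine sum_congr rfl fun y _ => sum_congr rfl fun x _ => ?_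
        rw [hC]
        ring
    _ = ∑ i, ∑ j, ∑ k, ∑ l, b i j * (C i j k l * a k l) := by
        simp only [Fintype.sum_prod_type]

theorem contract_swap {C : ι → ι → ι → ι → ℝ} (hC : ∀ i j k l, C i j k l = C i j l k)
    (a : ι → ι → ℝ) : contract C (fun k l => a l k) = contract C a := by
  ext i j
  simp only [contract_apply]
  rw [sum_comm]
  simp only [hC i j]

end DoubleContraction

section Deviators

variable {a b p : Fin 2 → Fin 2 → ℝ}

theorem doubleDot_kdelta (a : Fin 2 → Fin 2 → ℝ) : doubleDot kdelta a = ∑ i, a i i := by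
  simp [doubleDot_apply, kdelta]

theorem IsDeviator.doubleDot_eq (ha : IsDeviator a) (hb : IsDeviator b) :
    doubleDot a b = 2 * (a 0 0 * b 0 0 + a 0 1 * b 0 1) := by
  have hta := ha.trace_eq_zero
  have htb := hb.trace_eq_zero
  rw [Fin.sum_univ_two] at hta htb
  simp only [doubleDot_apply, Fin.sum_univ_two, ha.symm 1 0, hb.symm 1 0]
  linear_combination b 1 1 * hta - a 0 0 * htb

theorem IsDeviator.ext (ha : IsDeviator a) (hb : IsDeviator b) (h₀ : a 0 0 = b 0 0)
    (h₁ : a 0 1 = b 0 1) : a = b := by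
  have hta := ha.trace_eq_zero
  have htb := hb.trace_eq_zero
  rw [Fin.sum_univ_two] at hta htb
  ext i j
  fin_cases i <;> fin_cases j
  · exact h₀
  · exact h₁
  · exact (ha.symm 1 0).trans (h₁.trans (hb.symm 0 1))
  · change a 1 1 = b 1 1
    linear_combination hta - htb - h₀

theorem IsDeviator.smul (ha : IsDeviator a) (t : ℝ) : IsDeviator (t • a) :=
  ⟨fun i j => by simp [ha.symm i j], by simp [← mul_sum, ha.trace_eq_zero]⟩

/-- The deviators form a plane, so those orthogonal to `p` lie on a line. -/
theorem IsDeviator.eq_smul_of_doubleDot_eq_zero (hp : IsDeviator p) (ha : IsDeviator a)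
    (hb : IsDeviator b) (hp₀ : p ≠ 0) (ha₀ : a ≠ 0) (hap : doubleDot a p = 0)
    (hbp : doubleDot b p = 0) : b = (doubleDot a b / doubleDot a a) • a := by
  have hpp : doubleDot p p ≠ 0 := mt doubleDot_self_eq_zero.mp hp₀
  have haa : doubleDot a a ≠ 0 := mt doubleDot_self_eq_zero.mp ha₀
  rw [hp.doubleDot_eq hp] at hpp
  rw [ha.doubleDot_eq hp] at hap
  rw [hb.doubleDot_eq hp] at hbp
  have hdet : a 0 0 * b 0 1 - a 0 1 * b 0 0 = 0 := by
    refine (mul_eq_zero.mp ?_).resolve_left hpp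
    linear_combination (p 0 0 * b 0 1 - p 0 1 * b 0 0) * hap
      + (p 0 1 * a 0 0 - p 0 0 * a 0 1) * hbp
  refine hb.ext (ha.smul _) ?_ ?_ <;>
    simp only [Pi.smul_apply, smul_eq_mul] <;>
    rw [div_mul_eq_mul_div, eq_div_iff haa, ha.doubleDot_eq ha, ha.doubleDot_eq hb]
  · linear_combination (-2) * a 0 1 * hdet
  · linear_combination 2 * a 0 0 * hdet

end Deviators

section HarmonicPart

variable {C : Tens4} {a : Fin 2 → Fin 2 → ℝ}

theorem kdelta_comm (i j : Fin 2) : kdelta i j = kdelta j i := by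
  simp [kdelta, eq_comm]

theorem contract_kdelta (hC : ∀ i j k l, C i j k l = C k l i j) :
    contract C kdelta = dil C := by
  ext i j
  simp [contract_apply, dil, kdelta, hC i j]

theorem doubleDot_kdelta_contract (C : Tens4) (a : Fin 2 → Fin 2 → ℝ) :
    doubleDot kdelta (contract C a) = doubleDot (dil C) a := by
  rw [doubleDot_kdelta]
  simp only [doubleDot_apply, contract_apply, dil, Fin.sum_univ_two]
  ring

theorem IsElas.isDeviator_contract (hC : IsElas C) (h : doubleDot (dil C) a = 0) :
    IsDeviator (contract C a) where
  symm i j := by simp only [contract_apply, hC.1 i j]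
  trace_eq_zero := by rw [← doubleDot_kdelta, doubleDot_kdelta_contract, h]

theorem IsElas.isDeviator_devC (hC : IsElas C) : IsDeviator (devC C) where
  symm i j := by simp only [devC, dil, kdelta_comm i j, hC.2.1 _ _ i j]
  trace_eq_zero := by
    simp only [devC, kdelta, Fin.sum_univ_two, if_true]
    ring

theorem dil_eq_devC_add (C : Tens4) :
    dil C = devC C + ((∑ k, dil C k k) / 2) • kdelta := by
  ext i j
  simp [devC]

theorem IsDeviator.doubleDot_devC (ha : IsDeviator a) (C : Tens4) :
    doubleDot (devC C) a = doubleDot (dil C) a := by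
  rw [dil_eq_devC_add, map_add, LinearMap.add_apply, map_smul, LinearMap.smul_apply,
    doubleDot_kdelta, ha.trace_eq_zero, smul_zero, add_zero]

theorem IsDeviator.contract_Jten (ha : IsDeviator a) : contract Jten a = a := by
  have htr := ha.trace_eq_zero
  rw [Fin.sum_univ_two] at htr
  simp only [funext_iff, Fin.forall_fin_two, contract_apply, Jten, kdelta, Fin.sum_univ_two,
    if_true, zero_ne_one, one_ne_zero, if_false, ha.symm 1 0]
  refine ⟨⟨?_, ?_⟩, ?_, ?_⟩ <;> linarith

theorem IsDeviator.contract_harmC (ha : IsDeviator a) (C : Tens4) :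
    contract (harmC C) a
      = contract C a - (2 * muC C) • a - (doubleDot (devC C) a / 2) • kdelta := by
  have htr : doubleDot kdelta a = 0 := by rw [doubleDot_kdelta, ha.trace_eq_zero]
  ext i j
  have hJ : contract Jten a i j = a i j := by rw [ha.contract_Jten]
  simp only [contract_apply, doubleDot_apply, harmC, Fin.sum_univ_two, Pi.sub_apply,
    Pi.smul_apply, smul_eq_mul] at htr hJ ⊢
  linear_combination (-2 * muC C) * hJ - (kappaC C * kdelta i j + devC C i j / 2) * htr

theorem IsElas.isElas_harmC (hC : IsElas C) : IsElas (harmC C) := by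
  have hdev := hC.isDeviator_devC.symm
  obtain ⟨hleft, hright, hmajor⟩ := hC
  refine ⟨fun i j k l => ?_, fun i j k l => ?_, fun i j k l => ?_⟩ <;>
    simp only [harmC, Jten]
  · rw [hleft i j, kdelta_comm i j, hdev i j]
    ring
  · rw [hright i j k l, kdelta_comm k l, hdev k l]
    ring
  · rw [hmajor i j k l, kdelta_comm k i, kdelta_comm l j, kdelta_comm k j, kdelta_comm l i]
    ring

theorem dil_harmC (C : Tens4) : dil (harmC C) = 0 := by
  simp only [funext_iff, Fin.forall_fin_two, Pi.zero_apply, dil, harmC, Jten, kdelta, kappaC, devC,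
    Fin.sum_univ_two, if_true, zero_ne_one, one_ne_zero, if_false]
  refine ⟨⟨?_, ?_⟩, ?_, ?_⟩ <;> ring

theorem I2_eq_doubleDot (C : Tens4) : I2 C = doubleDot (devC C) (devC C) := by
  simp only [I2, doubleDot_apply, sq]

theorem IsElas.K3_eq_doubleDot (hC : IsElas C) :
    K3 C = doubleDot (devC C) (contract (harmC C) (devC C)) := by
  have hker : contract (harmC C) kdelta = 0 := by
    rw [contract_kdelta hC.isElas_harmC.2.2, dil_harmC]
  have hrange : doubleDot kdelta (contract (harmC C) (devC C)) = 0 := by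
    rw [doubleDot_kdelta_contract, dil_harmC, map_zero, LinearMap.zero_apply]
  calc K3 C = doubleDot (dil C) (contract (harmC C) (dil C)) := by
        simp only [K3, doubleDot_apply, contract_apply, mul_sum, mul_assoc]
    _ = doubleDot (devC C) (contract (harmC C) (devC C)) := by
        rw [dil_eq_devC_add]
        simp [hker, hrange]

end HarmonicPart

section Orthotropy

variable {C : Tens4} {g : Matrix (Fin 2) (Fin 2) ℝ}

theorem act_eq_doubleDot (g : Matrix (Fin 2) (Fin 2) ℝ) (C : Tens4) (i j k l : Fin 2) :
    act g C i j k l = doubleDot (dyad (g i) (g j)) (contract C (dyad (g k) (g l))) := by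
  simp only [act, doubleDot_apply, contract_apply, dyad, mul_sum]
  congr! 4
  ring

theorem rot_mem_orthogonalGroup (θ : ℝ) : rot θ ∈ Matrix.orthogonalGroup (Fin 2) ℝ := by
  rw [Matrix.mem_orthogonalGroup_iff]
  ext i j
  fin_cases i <;> fin_cases j <;>
    simp [rot, Matrix.mul_apply, ← sq, mul_comm]

theorem row_dotProduct_row (hg : g ∈ Matrix.orthogonalGroup (Fin 2) ℝ) (i j : Fin 2) :
    g i ⬝ᵥ g j = kdelta i j :=
  congrFun₂ ((Matrix.mem_orthogonalGroup_iff _ _).mp hg) i j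

theorem sum_dyad_row (hg : g ∈ Matrix.orthogonalGroup (Fin 2) ℝ) :
    dyad (g 0) (g 0) + dyad (g 1) (g 1) = kdelta := by
  ext i j
  have h := congrFun₂ ((Matrix.mem_orthogonalGroup_iff' _ _).mp hg) i j
  simpa [Matrix.mul_apply, Fin.sum_univ_two, Matrix.one_apply, dyad, kdelta] using h

/-- The pure shear `u ⊗ v + v ⊗ u` in the frame formed by the rows `u, v` of `g`. -/
def frameShear (g : Matrix (Fin 2) (Fin 2) ℝ) : Fin 2 → Fin 2 → ℝ :=
  dyad (g 0) (g 1) + dyad (g 1) (g 0)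

/-- The pure stretch `u ⊗ u - v ⊗ v` in the frame formed by the rows `u, v` of `g`. -/
def frameStretch (g : Matrix (Fin 2) (Fin 2) ℝ) : Fin 2 → Fin 2 → ℝ :=
  dyad (g 0) (g 0) - dyad (g 1) (g 1)

theorem isDeviator_frameShear (hg : g ∈ Matrix.orthogonalGroup (Fin 2) ℝ) :
    IsDeviator (frameShear g) where
  symm i j := by simp only [frameShear, dyad, Pi.add_apply]; ring
  trace_eq_zero := by
    rw [← doubleDot_kdelta, ← sum_dyad_row hg]
    simp [frameShear, doubleDot_dyad, row_dotProduct_row hg, kdelta]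

theorem isDeviator_frameStretch (hg : g ∈ Matrix.orthogonalGroup (Fin 2) ℝ) :
    IsDeviator (frameStretch g) where
  symm i j := by simp only [frameStretch, dyad, Pi.sub_apply]; ring
  trace_eq_zero := by
    rw [← doubleDot_kdelta, ← sum_dyad_row hg]
    simp [frameStretch, doubleDot_dyad, row_dotProduct_row hg, kdelta]

theorem frameShear_ne_zero (hg : g ∈ Matrix.orthogonalGroup (Fin 2) ℝ) : frameShear g ≠ 0 := by
  intro h
  have h₀ : doubleDot (frameShear g) (dyad (g 0) (g 1)) = 0 := by simp [h]
  simp [frameShear, doubleDot_dyad, row_dotProduct_row hg, kdelta] at h₀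

theorem frameStretch_ne_zero (hg : g ∈ Matrix.orthogonalGroup (Fin 2) ℝ) :
    frameStretch g ≠ 0 := by
  intro h
  have h₀ : doubleDot (frameStretch g) (dyad (g 0) (g 0)) = 0 := by simp [h]
  simp [frameStretch, doubleDot_dyad, row_dotProduct_row hg, kdelta] at h₀

theorem doubleDot_frameShear_frameStretch (hg : g ∈ Matrix.orthogonalGroup (Fin 2) ℝ) :
    doubleDot (frameShear g) (frameStretch g) = 0 := by
  simp [frameShear, frameStretch, doubleDot_dyad, row_dotProduct_row hg, kdelta]

theorem IsElas.contract_frameShear (hC : IsElas C) (g : Matrix (Fin 2) (Fin 2) ℝ) :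
    contract C (frameShear g) = (2 : ℝ) • contract C (dyad (g 0) (g 1)) := by
  have hswap : dyad (g 1) (g 0) = fun k l => dyad (g 0) (g 1) l k := by
    ext k l
    exact mul_comm _ _
  rw [frameShear, map_add, hswap, contract_swap hC.2.1, two_smul]

theorem IsElas.contract_frameShear_eq_smul (hC : IsElas C)
    (hg : g ∈ Matrix.orthogonalGroup (Fin 2) ℝ) (h₁ : act g C 0 0 0 1 = 0)
    (h₂ : act g C 0 1 1 1 = 0) : ∃ r : ℝ, contract C (frameShear g) = r • frameShear g := by
  have h₀₀ : doubleDot (dyad (g 0) (g 0)) (contract C (frameShear g)) = 0 := by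
    rw [hC.contract_frameShear, map_smul, ← act_eq_doubleDot, h₁, smul_zero]
  have h₁₁ : doubleDot (dyad (g 1) (g 1)) (contract C (frameShear g)) = 0 := by
    rw [hC.contract_frameShear, map_smul, doubleDot_contract_comm hC.2.2, ← act_eq_doubleDot, h₂,
      smul_zero]
  have hdev : IsDeviator (contract C (frameShear g)) := by
    apply hC.isDeviator_contract
    rw [← doubleDot_kdelta_contract, ← sum_dyad_row hg, map_add, LinearMap.add_apply, h₀₀, h₁₁,
      add_zero]
  have hstretch : doubleDot (contract C (frameShear g)) (frameStretch g) = 0 := by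
    rw [doubleDot_comm, frameStretch, map_sub, LinearMap.sub_apply, h₀₀, h₁₁, sub_zero]
  exact ⟨_, (isDeviator_frameStretch hg).eq_smul_of_doubleDot_eq_zero (isDeviator_frameShear hg)
    hdev (frameStretch_ne_zero hg) (frameShear_ne_zero hg)
    (doubleDot_frameShear_frameStretch hg) hstretch⟩

theorem IsElas.exists_deviator_eigentensor (hC : IsElas C) (hortho : IsOrtho C) :
    ∃ p, IsDeviator p ∧ p ≠ 0 ∧ ∃ r : ℝ, contract C p = r • p := by
  obtain ⟨θ, h₁, h₂⟩ := hortho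
  have hg := rot_mem_orthogonalGroup θ
  exact ⟨_, isDeviator_frameShear hg, frameShear_ne_zero hg,
    hC.contract_frameShear_eq_smul hg h₁ h₂⟩

theorem IsDeviator.doubleDot_devC_eq_zero {p : Fin 2 → Fin 2 → ℝ} (hp : IsDeviator p) {r : ℝ}
    (h : contract C p = r • p) : doubleDot (devC C) p = 0 := by
  rw [hp.doubleDot_devC, ← doubleDot_kdelta_contract, h, map_smul, doubleDot_kdelta,
    hp.trace_eq_zero, smul_zero]

theorem IsDeviator.contract_harmC_eq_smul {p : Fin 2 → Fin 2 → ℝ} (hp : IsDeviator p) {r : ℝ}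
    (h : contract C p = r • p) : contract (harmC C) p = (r - 2 * muC C) • p := by
  rw [hp.contract_harmC, hp.doubleDot_devC_eq_zero h, h, zero_div, zero_smul, sub_zero, sub_smul]

end Orthotropy

/-- For an orthotropic 2D elasticity tensor `C` with `d'(C) ≠ 0`,
the deviator `d'(C)` is an eigentensor of the harmonic part `H(C)`, with eigenvalue
`K₃/I₂`. -/
theorem dev_is_eigentensor_of_harmonic_part (C : Tens4) (hC : IsElas C)
    (horth : IsOrtho C) (hd : devC C ≠ 0) :
    ∀ i j, (∑ k, ∑ l, harmC C i j k l * devC C k l)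
      = K3 C / I2 C * devC C i j := by
  obtain ⟨p, hp, hp₀, r, hpC⟩ := hC.exists_deviator_eigentensor horth
  have hdp : doubleDot (devC C) p = 0 := hp.doubleDot_devC_eq_zero hpC
  have hHdp : doubleDot (contract (harmC C) (devC C)) p = 0 := by
    rw [doubleDot_comm, doubleDot_contract_comm hC.isElas_harmC.2.2, hp.contract_harmC_eq_smul hpC,
      map_smul, hdp, smul_zero]
  have hHd : IsDeviator (contract (harmC C) (devC C)) :=
    hC.isElas_harmC.isDeviator_contract (by simp [dil_harmC])
  have heigen : contract (harmC C) (devC C) = (K3 C / I2 C) • devC C := by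
    rw [hC.K3_eq_doubleDot, I2_eq_doubleDot]
    exact hp.eq_smul_of_doubleDot_eq_zero hC.isDeviator_devC hHd hp₀ hd hdp hHdp
  exact congrFun₂ heigen
end
end
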